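/- If a representation z_t preserves autoinformation at lag τ for a homogeneous Markov chain, then for any τ' ≥ τ the predictive distributions for any future target agree: p(y_{t+τ'} | z_t) yields the same mutual information I(z_t; y_{t+τ'}) = I(x_t; y_{t+τ'}) for every noisy function y_{t+τ'} = f(x_{t+τ'}, ε). -/

import Mathlib

open Finset

/-- Probability mass function of a random variable `X : Ω → α` under the weight `μ`. -/
def pmfOf {Ω α : Type} [Fintype Ω] [DecidableEq α] (μ : Ω → ℝ) (X : Ω → α) (a : α) : ℝ :=
  ∑ ω ∈ Finset.univ.filter (fun ω => X ω = a), μ ω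

/-- `μ` is a probability mass function on the finite sample space `Ω`. -/
def IsPMF {Ω : Type} [Fintype Ω] (μ : Ω → ℝ) : Prop :=
  (∀ ω, 0 ≤ μ ω) ∧ ∑ ω, μ ω = 1

/-- Mutual information `I(X; Y)` of two finite-valued random variables. -/
noncomputable def mi {Ω α β : Type} [Fintype Ω] [Fintype α] [DecidableEq α]
    [Fintype β] [DecidableEq β] (μ : Ω → ℝ) (X : Ω → α) (Y : Ω → β) : ℝ :=
  ∑ a : α, ∑ b : β,
    pmfOf μ (fun ω => (X ω, Y ω)) (a, b) *
      Real.log (pmfOf μ (fun ω => (X ω, Y ω)) (a, b) / (pmfOf μ X a * pmfOf μ Y b))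

/-- Conditional mutual information `I(X; Y | Z)` of finite-valued random variables. -/
noncomputable def cmi {Ω α β γ : Type} [Fintype Ω] [Fintype α] [DecidableEq α]
    [Fintype β] [DecidableEq β] [Fintype γ] [DecidableEq γ]
    (μ : Ω → ℝ) (X : Ω → α) (Y : Ω → β) (Z : Ω → γ) : ℝ :=
  ∑ a : α, ∑ b : β, ∑ c : γ,
    pmfOf μ (fun ω => (X ω, Y ω, Z ω)) (a, b, c) *
      Real.log (pmfOf μ (fun ω => (X ω, Y ω, Z ω)) (a, b, c) * pmfOf μ Z c /
        (pmfOf μ (fun ω => (X ω, Z ω)) (a, c) * pmfOf μ (fun ω => (Y ω, Z ω)) (b, c)))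

/-- Conditional pmf `P(X = a | Y = b)`. -/
noncomputable def condPMF {Ω α β : Type} [Fintype Ω] [DecidableEq α] [DecidableEq β]
    (μ : Ω → ℝ) (X : Ω → α) (Y : Ω → β) (a : α) (b : β) : ℝ :=
  pmfOf μ (fun ω => (X ω, Y ω)) (a, b) / pmfOf μ Y b

/-- Independence of two finite-valued random variables. -/
def IndepRV {Ω α β : Type} [Fintype Ω] [Fintype α] [DecidableEq α]
    [Fintype β] [DecidableEq β] (μ : Ω → ℝ) (X : Ω → α) (Y : Ω → β) : Prop :=
  ∀ a b, pmfOf μ (fun ω => (X ω, Y ω)) (a, b) = pmfOf μ X a * pmfOf μ Y b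

section Helpers

set_option linter.unusedSectionVars false

variable {Ω α β γ δ : Type} [Fintype Ω] [Fintype α] [DecidableEq α]
    [Fintype β] [DecidableEq β] [Fintype γ] [DecidableEq γ] [Fintype δ] [DecidableEq δ]

/-- Conditional independence in product form. -/
def CI (μ : Ω → ℝ) (X : Ω → α) (Y : Ω → β) (Z : Ω → γ) : Prop :=
  ∀ a b c, pmfOf μ (fun ω => (X ω, Y ω, Z ω)) (a, b, c) * pmfOf μ Z c =
    pmfOf μ (fun ω => (X ω, Z ω)) (a, c) * pmfOf μ (fun ω => (Y ω, Z ω)) (b, c)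

lemma pmfOf_eq (μ : Ω → ℝ) (X : Ω → α) (a : α) :
    pmfOf μ X a = ∑ ω, if X ω = a then μ ω else 0 := by
  rw [pmfOf, Finset.sum_filter]

lemma pmfOf_congr (μ : Ω → ℝ) (X : Ω → α) (Y : Ω → β) (a : α) (b : β)
    (h : ∀ ω, X ω = a ↔ Y ω = b) : pmfOf μ X a = pmfOf μ Y b := by
  simp only [pmfOf_eq, h]

lemma pmfOf_nonneg {μ : Ω → ℝ} (hμ : IsPMF μ) (X : Ω → α) (a : α) : 0 ≤ pmfOf μ X a :=
  Finset.sum_nonneg fun ω _ => hμ.1 ω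

lemma pmfOf_pos {μ : Ω → ℝ} (hμ : IsPMF μ) (X : Ω → α) (ω : Ω) (h : μ ω ≠ 0) :
    0 < pmfOf μ X (X ω) :=
  lt_of_lt_of_le (lt_of_le_of_ne (hμ.1 ω) h.symm)
    (Finset.single_le_sum (f := μ) (fun i _ => hμ.1 i) (by simp))

lemma pmfOf_le {μ : Ω → ℝ} (hμ : IsPMF μ) (X : Ω → α) (Y : Ω → β) (a : α) (b : β)
    (h : ∀ ω, X ω = a → Y ω = b) : pmfOf μ X a ≤ pmfOf μ Y b := by
  unfold pmfOf
  apply Finset.sum_le_sum_of_subset_of_nonneg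
  · intro ω; simpa using h ω
  · intro i _ _; exact hμ.1 i

lemma sum_pmfOf (μ : Ω → ℝ) (X : Ω → α) (F : α → ℝ) :
    ∑ a, pmfOf μ X a * F a = ∑ ω, μ ω * F (X ω) := by
  simp only [pmfOf_eq, Finset.sum_mul]
  rw [Finset.sum_comm]
  simp [ite_mul]

/-- Marginalisation over an extra variable. -/
lemma pmfOf_marg (μ : Ω → ℝ) (X : Ω → α) (Y : Ω → β) (a : α) :
    pmfOf μ X a = ∑ b, pmfOf μ (fun ω => (X ω, Y ω)) (a, b) := by
  simp only [pmfOf_eq, Prod.mk.injEq]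
  rw [Finset.sum_comm]
  refine Finset.sum_congr rfl fun ω _ => ?_
  by_cases h : X ω = a <;> simp [h]

/-- Push-forward. -/
lemma pmfOf_comp (μ : Ω → ℝ) (X : Ω → α) (f : α → β) (b : β) :
    pmfOf μ (fun ω => f (X ω)) b = ∑ a, if f a = b then pmfOf μ X a else 0 := by
  simp only [pmfOf_eq]
  have : ∀ a, (if f a = b then ∑ ω, (if X ω = a then μ ω else 0) else 0)
      = ∑ ω, if X ω = a then (if f a = b then μ ω else 0) else 0 := by
    intro a; split_ifs <;> simp
  simp only [this]
  rw [Finset.sum_comm]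
  simp

lemma pmfOf_comp_pair (μ : Ω → ℝ) (X : Ω → α) (Y : Ω → γ) (f : α → β) (b : β) (c : γ) :
    pmfOf μ (fun ω => (f (X ω), Y ω)) (b, c)
      = ∑ a, if f a = b then pmfOf μ (fun ω => (X ω, Y ω)) (a, c) else 0 := by
  simp only [pmfOf_eq, Prod.mk.injEq]
  have : ∀ a, (if f a = b then ∑ ω, (if X ω = a ∧ Y ω = c then μ ω else 0) else 0)
      = ∑ ω, if X ω = a then (if f a = b ∧ Y ω = c then μ ω else 0) else 0 := by
    intro a
    by_cases h : f a = b <;> simp [h, ite_and]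
  simp only [this]
  rw [Finset.sum_comm]
  simp

lemma CI.symm {μ : Ω → ℝ} {X : Ω → α} {Y : Ω → β} {Z : Ω → γ} (h : CI μ X Y Z) :
    CI μ Y X Z := by
  intro b a c
  rw [mul_comm (pmfOf μ (fun ω => (Y ω, Z ω)) (b, c)), ← h a b c]
  congr 1
  apply pmfOf_congr
  intro ω; simp only [Prod.mk.injEq]; tauto

lemma CI.map {μ : Ω → ℝ} {X : Ω → α} {Y : Ω → β} {Z : Ω → γ} (h : CI μ X Y Z) (f : α → δ) :
    CI μ (fun ω => f (X ω)) Y Z := by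
  intro d b c
  rw [pmfOf_comp_pair μ X (fun ω => (Y ω, Z ω)) f d (b, c), pmfOf_comp_pair μ X Z f d c,
    Finset.sum_mul, Finset.sum_mul]
  refine Finset.sum_congr rfl fun a _ => ?_
  split_ifs
  · exact h a b c
  · simp

lemma CI.adjoin {μ : Ω → ℝ} {X : Ω → α} {Y : Ω → β} {Z : Ω → γ} (h : CI μ X Y Z) :
    CI μ (fun ω => (X ω, Z ω)) Y Z := by
  rintro ⟨a, c'⟩ b c
  by_cases hc : c' = c
  · subst hc
    have := h a b c'
    convert this using 2
    · apply pmfOf_congr; intro ω; simp only [Prod.mk.injEq]; tauto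
    · apply pmfOf_congr; intro ω; simp only [Prod.mk.injEq]; tauto
  · have h1 : pmfOf μ (fun ω => ((X ω, Z ω), Y ω, Z ω)) ((a, c'), b, c) = 0 := by
      rw [pmfOf_eq]; apply Finset.sum_eq_zero; intro ω _
      rw [if_neg]; simp only [Prod.mk.injEq]; rintro ⟨⟨_, h1⟩, _, h2⟩; exact hc (h1.symm.trans h2)
    have h2 : pmfOf μ (fun ω => ((X ω, Z ω), Z ω)) ((a, c'), c) = 0 := by
      rw [pmfOf_eq]; apply Finset.sum_eq_zero; intro ω _
      rw [if_neg]; simp only [Prod.mk.injEq]; rintro ⟨⟨_, h1⟩, h2⟩; exact hc (h1.symm.trans h2)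
    rw [h1, h2]; simp

lemma CI.map₂ {μ : Ω → ℝ} {X : Ω → α} {Y : Ω → β} {Z : Ω → γ} (h : CI μ X Y Z)
    (f : α → γ → δ) : CI μ (fun ω => f (X ω) (Z ω)) Y Z :=
  h.adjoin.map (fun p => f p.1 p.2)

/-- The chain lemma: `X - V - W` and `(X,V) - W - Y` give `X - V - Y`. -/
lemma CI.chain {μ : Ω → ℝ} (hμ : IsPMF μ) {X : Ω → α} {W : Ω → δ} {V : Ω → γ} {Y : Ω → β}
    (h1 : CI μ X W V) (h2 : CI μ (fun ω => (X ω, V ω)) Y W) : CI μ X Y V := by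
  intro a b c
  have h3 : CI μ V Y W := h2.map Prod.snd
  have e1 := pmfOf_marg μ (fun ω => (X ω, Y ω, V ω)) W (a, b, c)
  have e2 := pmfOf_marg μ (fun ω => (Y ω, V ω)) W (b, c)
  rw [e1, e2, Finset.sum_mul, Finset.mul_sum]
  refine Finset.sum_congr rfl fun w _ => ?_
  have r1 : pmfOf μ (fun ω => ((X ω, Y ω, V ω), W ω)) ((a, b, c), w)
      = pmfOf μ (fun ω => ((X ω, V ω), Y ω, W ω)) ((a, c), b, w) := by
    apply pmfOf_congr; intro ω; simp only [Prod.mk.injEq]; tauto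
  have r2 : pmfOf μ (fun ω => ((Y ω, V ω), W ω)) ((b, c), w)
      = pmfOf μ (fun ω => (V ω, Y ω, W ω)) (c, b, w) := by
    apply pmfOf_congr; intro ω; simp only [Prod.mk.injEq]; tauto
  have r3 : pmfOf μ (fun ω => (X ω, W ω, V ω)) (a, w, c)
      = pmfOf μ (fun ω => ((X ω, V ω), W ω)) ((a, c), w) := by
    apply pmfOf_congr; intro ω; simp only [Prod.mk.injEq]; tauto
  have r4 : pmfOf μ (fun ω => (W ω, V ω)) (w, c)
      = pmfOf μ (fun ω => (V ω, W ω)) (c, w) := by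
    apply pmfOf_congr; intro ω; simp only [Prod.mk.injEq]; tauto
  have k1 := h1 a w c
  have k2 := h2 (a, c) b w
  have k3 := h3 c b w
  rw [r3, r4] at k1
  rw [r1, r2]
  by_cases hw : pmfOf μ W w = 0
  · have z1 : pmfOf μ (fun ω => ((X ω, V ω), Y ω, W ω)) ((a, c), b, w) = 0 := by
      apply le_antisymm _ (pmfOf_nonneg hμ _ _)
      rw [← hw]; apply pmfOf_le hμ; intro ω; simp only [Prod.mk.injEq]; tauto
    have z2 : pmfOf μ (fun ω => (V ω, Y ω, W ω)) (c, b, w) = 0 := by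
      apply le_antisymm _ (pmfOf_nonneg hμ _ _)
      rw [← hw]; apply pmfOf_le hμ; intro ω; simp only [Prod.mk.injEq]; tauto
    rw [z1, z2]; simp
  · apply mul_right_cancel₀ hw
    linear_combination (pmfOf μ V c) * k2
      + pmfOf μ (fun ω => (Y ω, W ω)) (b, w) * k1 - pmfOf μ (fun ω => (X ω, V ω)) (a, c) * k3

/-- Independence from a product form of the joint pmf. -/
lemma indep_of_factor {μ : Ω → ℝ} (hμ : IsPMF μ) {X : Ω → α} {Y : Ω → β} (F : α → ℝ) (G : β → ℝ)
    (h : ∀ a b, pmfOf μ (fun ω => (X ω, Y ω)) (a, b) = F a * G b) : IndepRV μ X Y := by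
  have hX : ∀ a, pmfOf μ X a = F a * ∑ b, G b := by
    intro a; rw [pmfOf_marg μ X Y, Finset.mul_sum]; simp only [h]
  have hY : ∀ b, pmfOf μ Y b = (∑ a, F a) * G b := by
    intro b
    rw [pmfOf_marg μ Y X, Finset.sum_mul]
    refine Finset.sum_congr rfl fun a _ => ?_
    rw [← h]
    apply pmfOf_congr; intro ω; simp only [Prod.mk.injEq]; tauto
  have h1 : (∑ a, F a) * ∑ b, G b = 1 := by
    have := sum_pmfOf μ X (fun _ => 1)
    simp only [mul_one, hμ.2, hX] at this
    rw [← Finset.sum_mul] at this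
    exact this
  intro a b
  rw [h, hX, hY]
  linear_combination -(F a * G b) * h1

lemma IndepRV.map_right {μ : Ω → ℝ} {X : Ω → α} {Y : Ω → β} (h : IndepRV μ X Y) (f : β → γ) :
    IndepRV μ X (fun ω => f (Y ω)) := by
  intro a c
  have e : pmfOf μ (fun ω => (X ω, f (Y ω))) (a, c)
      = pmfOf μ (fun ω => (f (Y ω), X ω)) (c, a) := by
    apply pmfOf_congr; intro ω; simp only [Prod.mk.injEq]; tauto
  rw [e, pmfOf_comp_pair, pmfOf_comp μ Y f, Finset.mul_sum]
  refine Finset.sum_congr rfl fun b _ => ?_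
  split_ifs
  · rw [← h]
    apply pmfOf_congr; intro ω; simp only [Prod.mk.injEq]; tauto
  · simp

/-- Independent noise gives conditional independence. -/
lemma IndepRV.ci {μ : Ω → ℝ} {N : Ω → α} {U : Ω → β} (h : IndepRV μ N U) (f : β → γ) :
    CI μ N U (fun ω => f (U ω)) := by
  intro a b c
  have hf := h.map_right f a c
  rw [hf]
  by_cases hc : f b = c
  · have e1 : pmfOf μ (fun ω => (N ω, U ω, f (U ω))) (a, b, c)
      = pmfOf μ (fun ω => (N ω, U ω)) (a, b) := by
      apply pmfOf_congr; intro ω; simp only [Prod.mk.injEq]; grind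
    have e2 : pmfOf μ (fun ω => (U ω, f (U ω))) (b, c) = pmfOf μ U b := by
      apply pmfOf_congr; intro ω; simp only [Prod.mk.injEq]; grind
    rw [e1, e2, h]; ring
  · have e1 : pmfOf μ (fun ω => (N ω, U ω, f (U ω))) (a, b, c) = 0 := by
      rw [pmfOf_eq]; apply Finset.sum_eq_zero; intro ω _
      rw [if_neg]; simp only [Prod.mk.injEq]; grind
    have e2 : pmfOf μ (fun ω => (U ω, f (U ω))) (b, c) = 0 := by
      rw [pmfOf_eq]; apply Finset.sum_eq_zero; intro ω _
      rw [if_neg]; simp only [Prod.mk.injEq]; grind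
    rw [e1, e2]; ring

/-- Expected log-probability (negative entropy). -/
noncomputable def logProb (μ : Ω → ℝ) (X : Ω → α) : ℝ := ∑ ω, μ ω * Real.log (pmfOf μ X (X ω))

lemma logProb_congr (μ : Ω → ℝ) (X : Ω → α) (Y : Ω → β)
    (h : ∀ ω ω', X ω = X ω' ↔ Y ω = Y ω') : logProb μ X = logProb μ Y := by
  unfold logProb
  refine Finset.sum_congr rfl fun ω _ => ?_
  rw [pmfOf_congr μ X Y (X ω) (Y ω) (fun ω' => h ω' ω)]

lemma mi_eq {μ : Ω → ℝ} (hμ : IsPMF μ) (X : Ω → α) (Y : Ω → β) :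
    mi μ X Y = logProb μ (fun ω => (X ω, Y ω)) - logProb μ X - logProb μ Y := by
  have := sum_pmfOf μ (fun ω => (X ω, Y ω)) (fun p => Real.log
    (pmfOf μ (fun ω => (X ω, Y ω)) p / (pmfOf μ X p.1 * pmfOf μ Y p.2)))
  rw [Fintype.sum_prod_type] at this
  unfold mi logProb
  rw [this, ← Finset.sum_sub_distrib, ← Finset.sum_sub_distrib]
  refine Finset.sum_congr rfl fun ω _ => ?_
  by_cases h : μ ω = 0
  · simp [h]
  · have p1 := pmfOf_pos hμ (fun ω => (X ω, Y ω)) ω h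
    have p2 := pmfOf_pos hμ X ω h
    have p3 := pmfOf_pos hμ Y ω h
    simp only at p1 ⊢
    rw [Real.log_div p1.ne' (by positivity), Real.log_mul p2.ne' p3.ne']
    ring

lemma cmi_eq {μ : Ω → ℝ} (hμ : IsPMF μ) (X : Ω → α) (Y : Ω → β) (Z : Ω → γ) :
    cmi μ X Y Z = logProb μ (fun ω => (X ω, Y ω, Z ω)) + logProb μ Z
      - logProb μ (fun ω => (X ω, Z ω)) - logProb μ (fun ω => (Y ω, Z ω)) := by
  have := sum_pmfOf μ (fun ω => (X ω, Y ω, Z ω)) (fun p => Real.log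
    (pmfOf μ (fun ω => (X ω, Y ω, Z ω)) p * pmfOf μ Z p.2.2 /
        (pmfOf μ (fun ω => (X ω, Z ω)) (p.1, p.2.2) * pmfOf μ (fun ω => (Y ω, Z ω)) (p.2.1, p.2.2))))
  simp only [Fintype.sum_prod_type] at this
  unfold cmi logProb
  rw [this, ← Finset.sum_add_distrib, ← Finset.sum_sub_distrib, ← Finset.sum_sub_distrib]
  refine Finset.sum_congr rfl fun ω _ => ?_
  by_cases h : μ ω = 0
  · simp [h]
  · have p1 := pmfOf_pos hμ (fun ω => (X ω, Y ω, Z ω)) ω h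
    have p2 := pmfOf_pos hμ (fun ω => (X ω, Z ω)) ω h
    have p3 := pmfOf_pos hμ (fun ω => (Y ω, Z ω)) ω h
    have p4 := pmfOf_pos hμ Z ω h
    simp only at p1 p2 p3 ⊢
    rw [Real.log_div (by positivity) (by positivity), Real.log_mul p2.ne' p3.ne',
      Real.log_mul p1.ne' p4.ne']
    ring

/-- Scalar Gibbs inequality with its equality case. -/
lemma gibbs_scalar {p q : ℝ} (hp : 0 ≤ p) (hq : 0 ≤ q) (hpq : p ≠ 0 → q ≠ 0) :
    0 ≤ p * Real.log (p / q) - p + q ∧ (p * Real.log (p / q) - p + q = 0 → p = q) := by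
  by_cases h : p = 0
  · subst h; simp [hq]; exact fun h => h.symm
  · have hq' : 0 < q := lt_of_le_of_ne hq (hpq h).symm
    have hp' : 0 < p := lt_of_le_of_ne hp (Ne.symm h)
    have hl : Real.log (p / q) = - Real.log (q / p) := by
      rw [← Real.log_inv, inv_div]
    have hm : p * (q / p) = q := by field_simp
    constructor
    · have := Real.log_le_sub_one_of_pos (div_pos hq' hp')
      rw [hl]; nlinarith
    · intro h0
      by_contra hne
      have hne' : q / p ≠ 1 := by
        intro h1; rw [h1] at hm; apply hne; linarith
      have := Real.log_lt_sub_one_of_pos (div_pos hq' hp') hne'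
      rw [hl] at h0; nlinarith

lemma cmi_gibbs {μ : Ω → ℝ} (hμ : IsPMF μ) (X : Ω → α) (Y : Ω → β) (Z : Ω → γ) :
    0 ≤ cmi μ X Y Z ∧ (cmi μ X Y Z = 0 ↔ CI μ X Y Z) := by
  set p : α × β × γ → ℝ := fun t => pmfOf μ (fun ω => (X ω, Y ω, Z ω)) t with hp
  set q : α × β × γ → ℝ := fun t => pmfOf μ (fun ω => (X ω, Z ω)) (t.1, t.2.2) *
    pmfOf μ (fun ω => (Y ω, Z ω)) (t.2.1, t.2.2) / pmfOf μ Z t.2.2 with hq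
  have hp0 : ∀ t, 0 ≤ p t := fun t => pmfOf_nonneg hμ _ _
  have hq0 : ∀ t, 0 ≤ q t := fun t =>
    div_nonneg (mul_nonneg (pmfOf_nonneg hμ _ _) (pmfOf_nonneg hμ _ _)) (pmfOf_nonneg hμ _ _)
  have hpZ : ∀ a b c, p (a, b, c) ≤ pmfOf μ Z c := fun a b c => by
    apply pmfOf_le hμ; intro ω; simp only [Prod.mk.injEq]; tauto
  have hpXZ : ∀ a b c, p (a, b, c) ≤ pmfOf μ (fun ω => (X ω, Z ω)) (a, c) := fun a b c => by
    apply pmfOf_le hμ; intro ω; simp only [Prod.mk.injEq]; tauto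
  have hpYZ : ∀ a b c, p (a, b, c) ≤ pmfOf μ (fun ω => (Y ω, Z ω)) (b, c) := fun a b c => by
    apply pmfOf_le hμ; intro ω; simp only [Prod.mk.injEq]; tauto
  have hXZZ : ∀ a c, pmfOf μ (fun ω => (X ω, Z ω)) (a, c) ≤ pmfOf μ Z c := fun a c => by
    apply pmfOf_le hμ; intro ω; simp only [Prod.mk.injEq]; tauto
  have hpq : ∀ t, p t ≠ 0 → q t ≠ 0 := by
    rintro ⟨a, b, c⟩ h
    have h' : 0 < p (a, b, c) := lt_of_le_of_ne (hp0 _) h.symm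
    have h1 := h'.trans_le (hpZ a b c)
    have h2 := h'.trans_le (hpXZ a b c)
    have h3 := h'.trans_le (hpYZ a b c)
    simp only [hq]; positivity
  have hG := fun t => gibbs_scalar (hp0 t) (hq0 t) (hpq t)
  have hsp : ∑ t, p t = 1 := by
    have := sum_pmfOf μ (fun ω => (X ω, Y ω, Z ω)) (fun _ => 1)
    simpa only [mul_one, hμ.2] using this
  have hsq : ∑ t, q t = 1 := by
    have e1 : ∀ c, ∑ a, pmfOf μ (fun ω => (X ω, Z ω)) (a, c) = pmfOf μ Z c := fun c => by
      rw [pmfOf_marg μ Z X]; refine Finset.sum_congr rfl fun a _ => ?_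
      apply pmfOf_congr; intro ω; simp only [Prod.mk.injEq]; tauto
    have e2 : ∀ c, ∑ b, pmfOf μ (fun ω => (Y ω, Z ω)) (b, c) = pmfOf μ Z c := fun c => by
      rw [pmfOf_marg μ Z Y]; refine Finset.sum_congr rfl fun a _ => ?_
      apply pmfOf_congr; intro ω; simp only [Prod.mk.injEq]; tauto
    have e3 : ∑ t, q t = ∑ c, ∑ a, ∑ b, q (a, b, c) := by
      simp only [Fintype.sum_prod_type]
      rw [Finset.sum_comm]
      have : ∀ b, ∑ a, ∑ c, q (a, b, c) = ∑ c, ∑ a, q (a, b, c) := fun b => Finset.sum_comm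
      simp only [this]
      rw [Finset.sum_comm]
      refine Finset.sum_congr rfl fun c _ => Finset.sum_comm
    have e4 : ∀ c, ∑ a, ∑ b, q (a, b, c) = pmfOf μ Z c := by
      intro c
      simp only [hq]
      simp only [← Finset.sum_div, ← Finset.mul_sum, ← Finset.sum_mul, e1, e2]
      by_cases h : pmfOf μ Z c = 0
      · simp [h]
      · field_simp
    rw [e3]; simp only [e4]
    have := sum_pmfOf μ Z (fun _ => 1)
    simpa only [mul_one, hμ.2] using this
  have hc : cmi μ X Y Z = ∑ t, (p t * Real.log (p t / q t) - p t + q t) := by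
    rw [Finset.sum_add_distrib, Finset.sum_sub_distrib, hsp, hsq]
    simp only [Fintype.sum_prod_type, cmi, hp, hq, div_div_eq_mul_div]
    ring
  refine ⟨?_, ?_, ?_⟩
  · rw [hc]; exact Finset.sum_nonneg fun t _ => (hG t).1
  · intro h0
    rw [hc, Finset.sum_eq_zero_iff_of_nonneg (fun t _ => (hG t).1)] at h0
    intro a b c
    have e := (hG (a, b, c)).2 (h0 _ (Finset.mem_univ _))
    by_cases h : pmfOf μ Z c = 0
    · have := le_antisymm (h ▸ hXZZ a c) (pmfOf_nonneg hμ _ _)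
      rw [h, this]; simp
    · simp only [hp, hq] at e
      rw [e]; field_simp
  · intro hCI
    rw [hc]
    refine Finset.sum_eq_zero ?_
    rintro ⟨a, b, c⟩ _
    have k := hCI a b c
    by_cases h : p (a, b, c) = 0
    · have : q (a, b, c) = 0 := by
        simp only [hp] at h
        simp only [hq]; rw [← k, h]; simp
      rw [h, this]; simp
    · have hz := ((lt_of_le_of_ne (hp0 _) (Ne.symm h)).trans_le (hpZ a b c)).ne'
      have : q (a, b, c) = p (a, b, c) := by
        simp only [hq, hp]; rw [← k]; field_simp
      rw [this, div_self h]; simp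

/-- Data processing: if `Z - X - Y` then `I(Z;Y) ≤ I(X;Y)`, with equality iff `X - Z - Y`. -/
lemma dpi {μ : Ω → ℝ} (hμ : IsPMF μ) {X : Ω → α} {Y : Ω → β} {Z : Ω → γ} (h : CI μ Z Y X) :
    mi μ Z Y ≤ mi μ X Y ∧ (mi μ Z Y = mi μ X Y ↔ CI μ X Y Z) := by
  have h1 := (cmi_gibbs hμ Z Y X).2.2 h
  obtain ⟨h2, h3⟩ := cmi_gibbs hμ X Y Z
  have key : mi μ X Y = mi μ Z Y + cmi μ X Y Z := by
    rw [← add_zero (mi μ X Y), ← h1]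
    rw [mi_eq hμ, mi_eq hμ, cmi_eq hμ, cmi_eq hμ]
    have r1 : logProb μ (fun ω => (Z ω, Y ω, X ω)) = logProb μ (fun ω => (X ω, Y ω, Z ω)) := by
      apply logProb_congr; intro ω ω'; simp only [Prod.mk.injEq]; tauto
    have r2 : logProb μ (fun ω => (Z ω, X ω)) = logProb μ (fun ω => (X ω, Z ω)) := by
      apply logProb_congr; intro ω ω'; simp only [Prod.mk.injEq]; tauto
    have r3 : logProb μ (fun ω => (Y ω, X ω)) = logProb μ (fun ω => (X ω, Y ω)) := by
      apply logProb_congr; intro ω ω'; simp only [Prod.mk.injEq]; tauto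
    have r4 : logProb μ (fun ω => (Y ω, Z ω)) = logProb μ (fun ω => (Z ω, Y ω)) := by
      apply logProb_congr; intro ω ω'; simp only [Prod.mk.injEq]; tauto
    rw [r1, r2, r3, r4]; ring
  refine ⟨by linarith, ?_⟩
  rw [← h3]
  constructor <;> intro h <;> linarith

lemma mi_comm {μ : Ω → ℝ} (hμ : IsPMF μ) (X : Ω → α) (Y : Ω → β) : mi μ X Y = mi μ Y X := by
  rw [mi_eq hμ, mi_eq hμ]
  have r3 : logProb μ (fun ω => (Y ω, X ω)) = logProb μ (fun ω => (X ω, Y ω)) := by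
    apply logProb_congr; intro ω ω'; simp only [Prod.mk.injEq]; tauto
  rw [r3]; ring

end Helpers

/-- One coordinate of an independent family is independent of the rest. -/
lemma indep_coord {Ω E F G : Type} {n : ℕ} [Fintype Ω] [Fintype E] [DecidableEq E]
    [Fintype F] [DecidableEq F] [Fintype G] [DecidableEq G] {μ : Ω → ℝ} (hμ : IsPMF μ)
    (Y : Ω → F) (N : Fin n → Ω → E) (X : Ω → G) (e0 : E)
    (h : ∀ (y : F) (e : Fin n → E) (v : G),
      pmfOf μ (fun ω => (Y ω, (fun i => N i ω), X ω)) (y, e, v)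
        = pmfOf μ Y y * (∏ i, pmfOf μ (N i) (e i)) * pmfOf μ X v) (i : Fin n) :
    IndepRV μ (N i) (fun ω => (Y ω, Function.update (fun j => N j ω) i e0, X ω)) := by
  apply indep_of_factor hμ (pmfOf μ (N i)) (fun t => if t.2.1 i = e0 then
    pmfOf μ Y t.1 * (∏ j ∈ Finset.univ.erase i, pmfOf μ (N j) (t.2.1 j)) * pmfOf μ X t.2.2 else 0)
  rintro a ⟨y, e, v⟩
  simp only
  split_ifs with he
  · have e1 : pmfOf μ (fun ω => (N i ω, Y ω, Function.update (fun j => N j ω) i e0, X ω)) (a, y, e, v)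
        = pmfOf μ (fun ω => (Y ω, (fun i => N i ω), X ω)) (y, Function.update e i a, v) := by
      apply pmfOf_congr
      intro ω
      simp only [Prod.mk.injEq, Function.update_eq_iff, Function.eq_update_iff]
      constructor
      · rintro ⟨h1, h2, ⟨_, h3⟩, h4⟩; exact ⟨h2, ⟨h1, h3⟩, h4⟩
      · rintro ⟨h2, ⟨h1, h3⟩, h4⟩; exact ⟨h1, h2, ⟨he.symm, h3⟩, h4⟩
    rw [e1, h, ← Finset.mul_prod_erase _ _ (Finset.mem_univ i)]
    have : ∏ j ∈ Finset.univ.erase i, pmfOf μ (N j) (Function.update e i a j)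
        = ∏ j ∈ Finset.univ.erase i, pmfOf μ (N j) (e j) := by
      refine Finset.prod_congr rfl fun j hj => ?_
      rw [Function.update_of_ne (Finset.ne_of_mem_erase hj)]
    rw [this, Function.update_self]; ring
  · rw [mul_zero, pmfOf_eq]
    apply Finset.sum_eq_zero; intro ω _
    rw [if_neg]
    simp only [Prod.mk.injEq, Function.update_eq_iff]
    rintro ⟨_, _, ⟨h3, _⟩, _⟩
    exact he h3.symm

/-- **Preservation at lag `τ` gives sufficiency at all larger lags**: if a sequence of
representations `z_t = g(x_t, ε_t)` of a homogeneous Markov chain preserves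
autoinformation at lag `τ` (average autoinformation gap zero), then for any `τ' ≥ τ` and
every noisy function `y_{t+τ'} = f(x_{t+τ'}, εy)` of the future state the predictive
information agrees: `I(z_t; y_{t+τ'}) = I(x_t; y_{t+τ'})`. -/
theorem sufficiency_at_larger_lags {Ω A E E' Z B : Type} [Fintype Ω]
    [Fintype A] [DecidableEq A] [Fintype E] [DecidableEq E] [Fintype E'] [DecidableEq E']
    [Fintype Z] [DecidableEq Z] [Fintype B] [DecidableEq B]
    (μ : Ω → ℝ) (hμ : IsPMF μ)
    (x : ℕ → Ω → A) (ε : ℕ → Ω → E) (εy : Ω → E') (g : A → E → Z)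
    (s T τ τ' : ℕ) (hτ : 0 < τ) (hττ' : τ ≤ τ') (hsT : s + τ' ≤ T)
    -- `[x_t]_{t=s}^T` is a Markov chain
    (hMarkov : ∀ m, s ≤ m → m < T →
      cmi μ (fun ω => fun i : Fin (m - s) => x (s + (i : ℕ)) ω) (x (m + 1)) (x m) = 0)
    -- homogeneity of the chain
    (hHomog : ∀ m m', s ≤ m → m < T → s ≤ m' → m' < T → ∀ a b : A,
      pmfOf μ (fun ω => (x m ω, x (m + 1) ω)) (a, b) * pmfOf μ (x m') a
        = pmfOf μ (fun ω => (x m' ω, x (m' + 1) ω)) (a, b) * pmfOf μ (x m) a)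
    -- the noise variables (including the target noise) are mutually independent and
    -- independent of the chain
    (hNoise : ∀ (ey : E') (e : Fin (T - s + 1) → E) (v : Fin (T - s + 1) → A),
      pmfOf μ (fun ω => (εy ω, (fun i : Fin (T - s + 1) => ε (s + (i : ℕ)) ω),
          (fun i : Fin (T - s + 1) => x (s + (i : ℕ)) ω))) (ey, e, v)
        = pmfOf μ εy ey * (∏ i : Fin (T - s + 1), pmfOf μ (ε (s + (i : ℕ))) (e i))
          * pmfOf μ (fun ω => fun i : Fin (T - s + 1) => x (s + (i : ℕ)) ω) v)
    -- the sequence preserves autoinformation at lag `τ`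
    (hAIG : ((T - s - τ + 1 : ℕ) : ℝ)⁻¹ *
      ∑ m ∈ Finset.Icc s (T - τ),
        (mi μ (x m) (x (m + τ))
          - mi μ (fun ω => g (x m ω) (ε m ω)) (fun ω => g (x (m + τ) ω) (ε (m + τ) ω))) = 0) :
    ∀ t, s ≤ t → t + τ' ≤ T → ∀ f : A → E' → B,
      mi μ (fun ω => g (x t ω) (ε t ω)) (fun ω => f (x (t + τ') ω) (εy ω))
        = mi μ (x t) (fun ω => f (x (t + τ') ω) (εy ω)) := by
  classical
  -- the noise facts
  have hne : Nonempty Ω := by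
    by_contra hc
    rw [not_nonempty_iff] at hc
    have := hμ.2
    simp at this
  obtain ⟨ω0⟩ := hne
  have hind := indep_coord hμ εy (fun i : Fin (T - s + 1) => ε (s + (i : ℕ)))
    (fun ω => fun i : Fin (T - s + 1) => x (s + (i : ℕ)) ω) (ε s ω0) hNoise
  -- noise at `m`, independent of `εy`, noise at `k` and states at `m`, `k`, `n`
  have hε : ∀ m k n, s ≤ m → m ≤ T → s ≤ k → k ≤ T → s ≤ n → n ≤ T → m ≠ k →
      IndepRV μ (ε m) (fun ω => (εy ω, ε k ω, x m ω, x k ω, x n ω)) := by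
    intro m k n hm hmT hk hkT hn hnT hmk
    have h1 := (hind ⟨m - s, by omega⟩).map_right (fun t : E' × (Fin (T - s + 1) → E) ×
      (Fin (T - s + 1) → A) => (t.1, t.2.1 ⟨k - s, by omega⟩, t.2.2 ⟨m - s, by omega⟩,
        t.2.2 ⟨k - s, by omega⟩, t.2.2 ⟨n - s, by omega⟩))
    have hne : (⟨k - s, by omega⟩ : Fin (T - s + 1)) ≠ ⟨m - s, by omega⟩ := by
      simp only [ne_eq, Fin.mk.injEq]; omega
    simp only [Function.update_of_ne hne] at h1
    simpa only [Nat.add_sub_cancel' hm, Nat.add_sub_cancel' hk, Nat.add_sub_cancel' hn] using h1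
  have hεy : ∀ m k n, s ≤ m → m ≤ T → s ≤ k → k ≤ T → s ≤ n → n ≤ T →
      IndepRV μ εy (fun ω => (ε m ω, x m ω, x k ω, x n ω)) := by
    intro m k n hm hmT hk hkT hn hnT
    have h0 : IndepRV μ εy (fun ω => ((fun i : Fin (T - s + 1) => ε (s + (i : ℕ)) ω),
          (fun i : Fin (T - s + 1) => x (s + (i : ℕ)) ω))) := by
      apply indep_of_factor hμ (pmfOf μ εy) (fun t =>
        (∏ i : Fin (T - s + 1), pmfOf μ (ε (s + (i : ℕ))) (t.1 i))
          * pmfOf μ (fun ω => fun i : Fin (T - s + 1) => x (s + (i : ℕ)) ω) t.2)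
      rintro ey ⟨e, v⟩
      rw [hNoise]; ring
    have h1 := h0.map_right (fun t : (Fin (T - s + 1) → E) ×
      (Fin (T - s + 1) → A) => (t.1 ⟨m - s, by omega⟩, t.2 ⟨m - s, by omega⟩,
        t.2 ⟨k - s, by omega⟩, t.2 ⟨n - s, by omega⟩))
    simpa only [Nat.add_sub_cancel' hm, Nat.add_sub_cancel' hk, Nat.add_sub_cancel' hn] using h1
  -- the Markov property at larger lags
  have hpast : ∀ k n, s ≤ k → k < n → n ≤ T →
      CI μ (fun ω => fun i : Fin (k - s) => x (s + (i : ℕ)) ω) (x n) (x k) := by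
    intro k n hk hkn
    induction n, hkn using Nat.le_induction with
    | base => intro hT; exact (cmi_gibbs hμ _ _ _).2.1 (hMarkov k hk (by omega))
    | succ n hkn ih =>
      intro hT
      have h1 := ih (by omega)
      have h2 := (cmi_gibbs hμ _ _ _).2.1 (hMarkov n (by omega) (by omega))
      refine CI.chain hμ h1 ?_
      have h3 := h2.map (fun v : Fin (n - s) → A =>
        ((fun i : Fin (k - s) => v ⟨i, by omega⟩), v ⟨k - s, by omega⟩))
      simpa only [Nat.add_sub_cancel' hk] using h3
  have hmk : ∀ m k n, s ≤ m → m < k → k < n → n ≤ T → CI μ (x m) (x n) (x k) := by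
    intro m k n hm hmk hkn hn
    have h1 := (hpast k n (by omega) hkn hn).map
      (fun v : Fin (k - s) → A => v ⟨m - s, by omega⟩)
    simpa only [Nat.add_sub_cancel' hm] using h1
  -- the representation and the data processing inequalities
  set z : ℕ → Ω → Z := fun m ω => g (x m ω) (ε m ω) with hz
  have hza : ∀ m n, s ≤ m → m < n → n ≤ T → CI μ (z m) (x n) (x m) := by
    intro m n hm hmn hn
    have h1 := (hε m n n hm (by omega) (by omega) hn (by omega) hn (by omega)).ci
      (fun t : E' × E × A × A × A => t.2.2.1)
    exact ((h1.map₂ (fun e a => g a e)).symm.map (fun t : E' × E × A × A × A => t.2.2.2.1)).symm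
  have hzb : ∀ m n, s ≤ m → m < n → n ≤ T → CI μ (z n) (z m) (x n) := by
    intro m n hm hmn hn
    have h1 := (hε n m n (by omega) (by omega) (by omega) (by omega) (by omega) hn (by omega)).ci
      (fun t : E' × E × A × A × A => t.2.2.1)
    exact ((h1.map₂ (fun e a => g a e)).symm.map
      (fun t : E' × E × A × A × A => g t.2.2.2.1 t.2.1)).symm
  have hle : ∀ m n, s ≤ m → m < n → n ≤ T → mi μ (z m) (z n) ≤ mi μ (z m) (x n) ∧
      mi μ (z m) (x n) ≤ mi μ (x m) (x n) := by
    intro m n hm hmn hn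
    refine ⟨?_, (dpi hμ (hza m n hm hmn hn)).1⟩
    rw [mi_comm hμ (z m), mi_comm hμ (z m)]
    exact (dpi hμ (hzb m n hm hmn hn)).1
  -- every gap vanishes
  have hgap : ∀ m, s ≤ m → m + τ ≤ T → mi μ (x m) (x (m + τ)) - mi μ (z m) (z (m + τ)) = 0 := by
    have h0 := (mul_eq_zero.1 hAIG).resolve_left (by positivity)
    rw [Finset.sum_eq_zero_iff_of_nonneg] at h0
    · intro m hm hmT
      exact h0 m (Finset.mem_Icc.2 ⟨hm, by omega⟩)
    · intro m hm
      rw [Finset.mem_Icc] at hm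
      have := hle m (m + τ) hm.1 (by omega) (by omega)
      exact sub_nonneg.2 (this.1.trans this.2)
  intro t ht htT f
  have hk : t + τ ≤ T := by omega
  have hl := hle t (t + τ) ht (by omega) hk
  have hg := hgap t ht hk
  have hsuff : CI μ (x t) (x (t + τ)) (z t) :=
    (dpi hμ (hza t (t + τ) ht (by omega) hk)).2.1 (by linarith [hl.1, hl.2])
  -- the target depends on the present only through `x (t + τ)`
  have hy1 : CI μ (fun ω => (x t ω, z t ω)) (fun ω => f (x (t + τ') ω) (εy ω)) (x (t + τ)) := by
    rcases Nat.eq_or_lt_of_le hττ' with rfl | hlt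
    · have h1 := (hεy t (t + τ) (t + τ) ht (by omega) (by omega) hk (by omega) hk).ci
        (fun t : E × A × A × A => t.2.2.1)
      exact (h1.map₂ (fun e a => f a e)).symm.map (fun t : E × A × A × A => (t.2.1, g t.2.1 t.1))
    · have h1 := (hmk t (t + τ) (t + τ') ht (by omega) (by omega) htT).symm
      have h2 := (hε t (t + τ) (t + τ') ht (by omega) (by omega) hk (by omega) htT (by omega)).ci
        (fun t : E' × E × A × A × A => t.2.2.1)
      have h3 : CI μ (fun ω => (x (t + τ') ω, x (t + τ) ω)) (fun ω => (x t ω, z t ω)) (x t) :=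
        ((h2.map₂ (fun e a => (a, g a e))).symm.map
          (fun t : E' × E × A × A × A => (t.2.2.2.2, t.2.2.2.1)))
      have h4 := (CI.chain hμ h1 h3).symm
      refine CI.chain hμ h4 ?_
      have h5 := (hεy t (t + τ) (t + τ') ht (by omega) (by omega) hk (by omega) htT).ci
        (fun t : E × A × A × A => t.2.2.2)
      exact (h5.map₂ (fun e a => f a e)).symm.map
        (fun t : E × A × A × A => ((t.2.1, g t.2.1 t.1), t.2.2.1))
  have hy2 : CI μ (x t) (fun ω => f (x (t + τ') ω) (εy ω)) (z t) := CI.chain hμ hsuff hy1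
  have hy3 : CI μ (z t) (fun ω => f (x (t + τ') ω) (εy ω)) (x t) := by
    have h1 := (hε t (t + τ) (t + τ') ht (by omega) (by omega) hk (by omega) htT (by omega)).ci
      (fun t : E' × E × A × A × A => t.2.2.1)
    exact ((h1.map₂ (fun e a => g a e)).symm.map
      (fun t : E' × E × A × A × A => f t.2.2.2.2 t.1)).symm
  exact (dpi hμ hy3).2.2 hy2
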